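/- arXiv:2204.01654 — 4 statements merged into one kernel-verified Lean document; each statement's English description precedes it below -/
import Mathlib

section
/- Let n, m be positive integers, let A be a real n×n matrix and B a real n×m matrix, and let Q (n×n) and R (m×m) be symmetric positive definite matrices. If the pair (A,B) is asymptotically stabilizable, i.e., there exists a real m×n matrix F such that every (complex) eigenvalue of A + B·F has modulus strictly less than 1, then there exists a symmetric positive definite n×n matrix P satisfying the discrete algebraic Riccati equation P = Aᵀ P A + Q − Aᵀ P B (R + Bᵀ P B)⁻¹ Bᵀ P A. -/
open Matrix

namespace DareAux

variable {n m : ℕ}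

/-- Riccati map. -/
noncomputable def Ric (A : Matrix (Fin n) (Fin n) ℝ) (B : Matrix (Fin n) (Fin m) ℝ)
    (Q : Matrix (Fin n) (Fin n) ℝ) (R : Matrix (Fin m) (Fin m) ℝ)
    (P : Matrix (Fin n) (Fin n) ℝ) : Matrix (Fin n) (Fin n) ℝ :=
  Aᵀ * P * A + Q - Aᵀ * P * B * (R + Bᵀ * P * B)⁻¹ * Bᵀ * P * A

/-- closed-loop Lyapunov map. -/
def Lya (A : Matrix (Fin n) (Fin n) ℝ) (B : Matrix (Fin n) (Fin m) ℝ)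
    (Q : Matrix (Fin n) (Fin n) ℝ) (R : Matrix (Fin m) (Fin m) ℝ)
    (K : Matrix (Fin m) (Fin n) ℝ)
    (P : Matrix (Fin n) (Fin n) ℝ) : Matrix (Fin n) (Fin n) ℝ :=
  (A + B * K)ᵀ * P * (A + B * K) + (Kᵀ * R * K + Q)

theorem symm_of_psd {k : ℕ} {P : Matrix (Fin k) (Fin k) ℝ} (h : P.PosSemidef) : Pᵀ = P := by
  have := h.isHermitian
  rwa [Matrix.IsHermitian, conjTranspose_eq_transpose_of_trivial] at this

theorem psd_conj {k l : ℕ} {P : Matrix (Fin k) (Fin k) ℝ} (h : P.PosSemidef)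
    (X : Matrix (Fin k) (Fin l) ℝ) : (Xᵀ * P * X).PosSemidef := by
  have := h.conjTranspose_mul_mul_same X
  rwa [conjTranspose_eq_transpose_of_trivial] at this

variable (A : Matrix (Fin n) (Fin n) ℝ) (B : Matrix (Fin n) (Fin m) ℝ)
    (Q : Matrix (Fin n) (Fin n) ℝ) (R : Matrix (Fin m) (Fin m) ℝ)

theorem G_pd {P : Matrix (Fin n) (Fin n) ℝ} (hR : R.PosDef) (hP : P.PosSemidef) :
    (R + Bᵀ * P * B).PosDef := hR.add_posSemidef (psd_conj hP B)

theorem square {P : Matrix (Fin n) (Fin n) ℝ} (hR : R.PosDef) (hP : P.PosSemidef)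
    (K : Matrix (Fin m) (Fin n) ℝ) :
    Lya A B Q R K P = Ric A B Q R P +
      (K + (R + Bᵀ * P * B)⁻¹ * (Bᵀ * P * A))ᵀ * (R + Bᵀ * P * B) *
        (K + (R + Bᵀ * P * B)⁻¹ * (Bᵀ * P * A)) := by
  have hG := G_pd B R hR hP
  have hu : IsUnit (R + Bᵀ * P * B).det := (Matrix.isUnit_iff_isUnit_det _).1 hG.isUnit
  have hGs := symm_of_psd hG.posSemidef
  have hPs := symm_of_psd hP
  have e1 : (K + (R + Bᵀ * P * B)⁻¹ * (Bᵀ * P * A))ᵀ * (R + Bᵀ * P * B) *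
        (K + (R + Bᵀ * P * B)⁻¹ * (Bᵀ * P * A)) =
      Kᵀ * (R + Bᵀ * P * B) * K + Kᵀ * (Bᵀ * P * A) + (Aᵀ * P * B) * K
        + Aᵀ * P * B * (R + Bᵀ * P * B)⁻¹ * (Bᵀ * P * A) := by
    have hN : (Bᵀ * P * A)ᵀ = Aᵀ * P * B := by
      simp [Matrix.transpose_mul, hPs, Matrix.mul_assoc]
    rw [transpose_add, transpose_mul, hN, transpose_nonsing_inv, hGs]
    generalize R + Bᵀ * P * B = G at *
    generalize Bᵀ * P * A = N
    generalize Aᵀ * P * B = N'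
    rw [Matrix.add_mul, Matrix.mul_assoc N', Matrix.nonsing_inv_mul _ hu, Matrix.mul_one,
      Matrix.mul_add, Matrix.add_mul, Matrix.add_mul, Matrix.mul_assoc Kᵀ G (G⁻¹ * N),
      Matrix.mul_nonsing_inv_cancel_left _ _ hu]
    simp only [Matrix.mul_assoc]
    abel
  rw [e1]
  unfold Lya Ric
  generalize (R + Bᵀ * P * B)⁻¹ = H
  simp only [transpose_add, transpose_mul, Matrix.add_mul, Matrix.mul_add, Matrix.mul_assoc]
  abel

theorem ric_eq_lya {P : Matrix (Fin n) (Fin n) ℝ} (hR : R.PosDef) (hP : P.PosSemidef) :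
    ∃ K, Ric A B Q R P = Lya A B Q R K P := by
  refine ⟨-((R + Bᵀ * P * B)⁻¹ * (Bᵀ * P * A)), ?_⟩
  rw [square A B Q R hR hP]
  simp

open scoped MatrixOrder

theorem ric_le_lya {P : Matrix (Fin n) (Fin n) ℝ} (hR : R.PosDef) (hP : P.PosSemidef)
    (K : Matrix (Fin m) (Fin n) ℝ) : Ric A B Q R P ≤ Lya A B Q R K P := by
  rw [square A B Q R hR hP K, Matrix.le_iff, add_sub_cancel_left]
  exact psd_conj (G_pd B R hR hP).posSemidef _

theorem lya_mono {P P' : Matrix (Fin n) (Fin n) ℝ} (h : P ≤ P')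
    (K : Matrix (Fin m) (Fin n) ℝ) : Lya A B Q R K P ≤ Lya A B Q R K P' := by
  rw [Matrix.le_iff] at *
  have := psd_conj h (A + B * K)
  unfold Lya
  rwa [add_sub_add_right_eq_sub, ← Matrix.sub_mul, ← Matrix.mul_sub]

theorem ric_mono {P P' : Matrix (Fin n) (Fin n) ℝ} (hR : R.PosDef) (hP : P.PosSemidef)
    (hP' : P'.PosSemidef) (h : P ≤ P') : Ric A B Q R P ≤ Ric A B Q R P' := by
  obtain ⟨K, hK⟩ := ric_eq_lya A B Q R hR hP'
  rw [hK]
  exact (ric_le_lya A B Q R hR hP K).trans (lya_mono A B Q R h K)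

theorem ric_pd {P : Matrix (Fin n) (Fin n) ℝ} (hQ : Q.PosDef) (hR : R.PosDef)
    (hP : P.PosSemidef) : (Ric A B Q R P).PosDef := by
  obtain ⟨K, hK⟩ := ric_eq_lya A B Q R hR hP
  rw [hK]
  exact Matrix.PosDef.posSemidef_add (psd_conj hP _)
    (Matrix.PosDef.posSemidef_add (psd_conj hR.posSemidef _) hQ)

theorem psd_limit {u : ℕ → Matrix (Fin n) (Fin n) ℝ} {P : Matrix (Fin n) (Fin n) ℝ}
    (hu : ∀ k, (u k).PosSemidef) (h : Filter.Tendsto u Filter.atTop (nhds P)) :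
    P.PosSemidef := by
  refine Matrix.PosSemidef.of_dotProduct_mulVec_nonneg ?_ ?_
  · have h2 : Filter.Tendsto (fun k => (u k)ᴴ) Filter.atTop (nhds Pᴴ) :=
      ((continuous_id.matrix_conjTranspose).tendsto P).comp h
    exact tendsto_nhds_unique (h2.congr fun k => (hu k).isHermitian) h
  · intro x
    have hc : Continuous fun M : Matrix (Fin n) (Fin n) ℝ => star x ⬝ᵥ (M *ᵥ x) := by fun_prop
    exact ge_of_tendsto' ((hc.tendsto P).comp h) fun k => (hu k).dotProduct_mulVec_nonneg x

theorem mono_conv {u : ℕ → Matrix (Fin n) (Fin n) ℝ} {S : Matrix (Fin n) (Fin n) ℝ}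
    (hu : ∀ k, (u k).PosSemidef) (hm : Monotone u) (hS : ∀ k, u k ≤ S) :
    ∃ P, Filter.Tendsto u Filter.atTop (nhds P) := by
  have hq : ∀ x : Fin n → ℝ, ∃ l,
      Filter.Tendsto (fun k => x ⬝ᵥ (u k *ᵥ x)) Filter.atTop (nhds l) := by
    intro x
    have key : ∀ M N : Matrix (Fin n) (Fin n) ℝ, M ≤ N → x ⬝ᵥ (M *ᵥ x) ≤ x ⬝ᵥ (N *ᵥ x) := by
      intro M N h
      have := (Matrix.le_iff.1 h).dotProduct_mulVec_nonneg x
      rw [star_trivial, Matrix.sub_mulVec, dotProduct_sub] at this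
      linarith
    refine ⟨_, tendsto_atTop_ciSup (fun a b hab => key _ _ (hm hab)) ⟨x ⬝ᵥ (S *ᵥ x), ?_⟩⟩
    rintro _ ⟨k, rfl⟩
    exact key _ _ (hS k)
  choose l hl using hq
  refine ⟨fun i j => (l (Pi.single i 1 + Pi.single j 1) - l (Pi.single i 1)
    - l (Pi.single j 1)) / 2, ?_⟩
  refine tendsto_pi_nhds.2 fun i => tendsto_pi_nhds.2 fun j => ?_
  refine ((((hl (Pi.single i 1 + Pi.single j 1)).sub (hl (Pi.single i 1))).sub
    (hl (Pi.single j 1))).div_const 2).congr fun k => ?_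
  have hs : u k j i = u k i j := congrFun (congrFun (symm_of_psd (hu k)) i) j
  simp [Matrix.mulVec_add, add_dotProduct, dotProduct_add, hs]
  ring

theorem ric_tendsto {u : ℕ → Matrix (Fin n) (Fin n) ℝ} {P : Matrix (Fin n) (Fin n) ℝ}
    (hR : R.PosDef) (hP : P.PosSemidef) (h : Filter.Tendsto u Filter.atTop (nhds P)) :
    Filter.Tendsto (fun k => Ric A B Q R (u k)) Filter.atTop (nhds (Ric A B Q R P)) := by
  have hu : IsUnit (R + Bᵀ * P * B).det :=
    (Matrix.isUnit_iff_isUnit_det _).1 (G_pd B R hR hP).isUnit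
  have hinv : ContinuousAt (fun G : Matrix (Fin m) (Fin m) ℝ => G⁻¹) (R + Bᵀ * P * B) := by
    refine continuousAt_matrix_inv _ ?_
    have : (Ring.inverse : ℝ → ℝ) = fun x => x⁻¹ := by ext; simp
    rw [this]
    exact continuousAt_inv₀ hu.ne_zero
  have h1 : Continuous fun M : Matrix (Fin n) (Fin n) ℝ => R + Bᵀ * M * B := by fun_prop
  have h2 : ContinuousAt (fun M => (R + Bᵀ * M * B)⁻¹) P :=
    ContinuousAt.comp (f := fun M : Matrix (Fin n) (Fin n) ℝ => R + Bᵀ * M * B) hinv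
      h1.continuousAt
  have h3 : ContinuousAt (Ric A B Q R) P := by
    unfold Ric
    have hc : Continuous fun p : Matrix (Fin n) (Fin n) ℝ × Matrix (Fin m) (Fin m) ℝ =>
      Aᵀ * p.1 * A + Q - Aᵀ * p.1 * B * p.2 * Bᵀ * p.1 * A := by fun_prop
    exact ContinuousAt.comp (f := fun M => (M, (R + Bᵀ * M * B)⁻¹)) hc.continuousAt
      (continuousAt_id.prodMk h2)
  exact h3.tendsto.comp h

section norm

attribute [local instance] Matrix.linftyOpNormedRing Matrix.linftyOpNormedAlgebra

theorem pow_bound (M : Matrix (Fin n) (Fin n) ℝ)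
    (h : ∀ μ ∈ spectrum ℂ (M.map (fun a => (a : ℂ))), ‖μ‖ < 1) :
    ∃ r : ℝ, 0 ≤ r ∧ r < 1 ∧ ∀ᶠ k in Filter.atTop, ‖M ^ k‖ ≤ r ^ k := by
  rcases Nat.eq_zero_or_pos n with rfl | hn
  · exact ⟨0, le_rfl, one_pos, Filter.Eventually.of_forall fun k => by
      rw [Subsingleton.elim (M ^ k) 0, norm_zero]; positivity⟩
  have : Nonempty (Fin n) := ⟨⟨0, hn⟩⟩
  have : Nontrivial (Matrix (Fin n) (Fin n) ℂ) := inferInstance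
  have : CompleteSpace (Matrix (Fin n) (Fin n) ℂ) := FiniteDimensional.complete ℂ _
  set C := M.map (fun a => (a : ℂ)) with hC
  have hlt : spectralRadius ℂ C < (1 : NNReal) :=
    spectrum.spectralRadius_lt_of_forall_lt C fun z hz => by
      have := h z hz
      exact_mod_cast this
  obtain ⟨r, hr1, hr2⟩ := ENNReal.lt_iff_exists_nnreal_btwn.1 hlt
  have hg := spectrum.pow_nnnorm_pow_one_div_tendsto_nhds_spectralRadius C
  refine ⟨r, r.2, by exact_mod_cast hr2, ?_⟩
  filter_upwards [hg.eventually_lt_const hr1, Filter.eventually_gt_atTop 0] with k hk hk0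
  have hkR : (0 : ℝ) < k := by exact_mod_cast hk0
  have h1 : (‖C ^ k‖₊ : ENNReal) ≤ (r : ENNReal) ^ k := by
    have := ENNReal.rpow_le_rpow hk.le hkR.le
    rwa [← ENNReal.rpow_mul, one_div, inv_mul_cancel₀ hkR.ne', ENNReal.rpow_one,
      ENNReal.rpow_natCast] at this
  have h2 : ‖C ^ k‖₊ ≤ r ^ k := by exact_mod_cast h1
  have h3 : C ^ k = (M ^ k).map (fun a => (a : ℂ)) :=
    (Matrix.map_pow M (Complex.ofRealHom) k).symm
  have h4 : ‖C ^ k‖₊ = ‖M ^ k‖₊ := by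
    rw [h3]
    simp [Matrix.linfty_opNNNorm_def]
  rw [h4] at h2
  exact_mod_cast h2

theorem lyap (M W : Matrix (Fin n) (Fin n) ℝ) (hW : W.PosSemidef)
    (h : ∀ μ ∈ spectrum ℂ (M.map (fun a => (a : ℂ))), ‖μ‖ < 1) :
    ∃ S : Matrix (Fin n) (Fin n) ℝ, S.PosSemidef ∧ Mᵀ * S * M + W = S := by
  have : CompleteSpace (Matrix (Fin n) (Fin n) ℝ) := FiniteDimensional.complete ℝ _
  obtain ⟨r, hr0, hr1, hr⟩ := pow_bound M h
  obtain ⟨r', hr0', hr1', hr'⟩ := pow_bound Mᵀ (by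
    have e : Mᵀ.map (fun a => (a : ℂ)) = (M.map (fun a => (a : ℂ)))ᵀ := rfl
    intro μ hμ
    apply h
    rw [e] at hμ
    rw [spectrum.mem_iff, Matrix.isUnit_iff_isUnit_det] at hμ ⊢
    rw [← Matrix.det_transpose] at hμ
    simpa [Matrix.transpose_sub, Matrix.algebraMap_eq_diagonal] using hμ)
  have hs : Summable fun k : ℕ => (Mᵀ) ^ k * W * M ^ k := by
    have hb : Summable fun k : ℕ => ‖W‖ * (r' * r) ^ k :=
      (summable_geometric_of_lt_one (by positivity) (by nlinarith)).mul_left _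
    refine Summable.of_norm_bounded_eventually_nat hb ?_
    filter_upwards [hr, hr'] with k h1 h2
    calc ‖(Mᵀ) ^ k * W * M ^ k‖ ≤ ‖(Mᵀ) ^ k * W‖ * ‖M ^ k‖ := norm_mul_le _ _
      _ ≤ (‖(Mᵀ) ^ k‖ * ‖W‖) * ‖M ^ k‖ := by gcongr; exact norm_mul_le _ _
      _ ≤ (r' ^ k * ‖W‖) * r ^ k := by gcongr
      _ = ‖W‖ * (r' * r) ^ k := by rw [mul_pow]; ring
  refine ⟨∑' k : ℕ, (Mᵀ) ^ k * W * M ^ k, ?_, ?_⟩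
  · refine psd_limit (fun N => ?_) hs.hasSum.tendsto_sum_nat
    refine Matrix.posSemidef_sum _ fun k _ => ?_
    have := psd_conj hW (M ^ k)
    rwa [Matrix.transpose_pow] at this
  · rw [← hs.tsum_mul_left, ← Summable.tsum_mul_right _ (hs.mul_left _),
      hs.tsum_eq_zero_add, add_comm]
    congr 1
    · simp
    · refine tsum_congr fun k => ?_
      rw [pow_succ' Mᵀ, pow_succ M]
      simp only [mul_assoc]

end norm

end DareAux

open DareAux MatrixOrder in
/-- If `(A,B)` is asymptotically stabilizable (there exists `F` such that all
complex eigenvalues of `A + B*F` have modulus `< 1`), and `Q`, `R` are symmetric positive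
definite, then there exists a symmetric positive definite `P` solving the discrete algebraic
Riccati equation `P = Aᵀ P A + Q − Aᵀ P B (R + Bᵀ P B)⁻¹ Bᵀ P A`. -/
theorem dare_solution_exists_of_stabilizable
    (n m : ℕ) (hn : 0 < n) (hm : 0 < m)
    (A : Matrix (Fin n) (Fin n) ℝ) (B : Matrix (Fin n) (Fin m) ℝ)
    (Q : Matrix (Fin n) (Fin n) ℝ) (R : Matrix (Fin m) (Fin m) ℝ)
    (hQsymm : Q.IsSymm) (hQ : Q.PosDef) (hRsymm : R.IsSymm) (hR : R.PosDef)
    (hstab : ∃ F : Matrix (Fin m) (Fin n) ℝ,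
      ∀ μ ∈ spectrum ℂ ((A + B * F).map (fun a => (a : ℂ))), ‖μ‖ < 1) :
    ∃ P : Matrix (Fin n) (Fin n) ℝ, P.IsSymm ∧ P.PosDef ∧
      P = Aᵀ * P * A + Q - Aᵀ * P * B * (R + Bᵀ * P * B)⁻¹ * Bᵀ * P * A := by
  obtain ⟨F, hF⟩ := hstab
  obtain ⟨S, hS, hSe⟩ := lyap (A + B * F) (Fᵀ * R * F + Q)
    ((psd_conj hR.posSemidef F).add hQ.posSemidef) hF
  have hSe' : Lya A B Q R F S = S := hSe
  let u : ℕ → Matrix (Fin n) (Fin n) ℝ := fun k => (Ric A B Q R)^[k] 0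
  have hsucc : ∀ k, u (k + 1) = Ric A B Q R (u k) := fun k =>
    Function.iterate_succ_apply' _ _ _
  have hu : ∀ k, (u k).PosSemidef := by
    intro k
    induction k with
    | zero => exact Matrix.PosSemidef.zero
    | succ k ih => rw [hsucc]; exact (ric_pd A B Q R hQ hR ih).posSemidef
  have hmono : ∀ k, (u (k + 1) - u k).PosSemidef := by
    intro k
    induction k with
    | zero => simpa [u] using hu 1
    | succ k ih =>
      rw [hsucc (k + 1)]
      nth_rewrite 2 [hsucc k]
      exact ric_mono A B Q R hR (hu k) (hu (k + 1)) ih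
  have hle : ∀ k, (S - u k).PosSemidef := by
    intro k
    induction k with
    | zero => simpa [u] using hS
    | succ k ih =>
      rw [hsucc]
      have h1 := ric_le_lya A B Q R hR (hu k) F
      have h2 := lya_mono A B Q R (P := u k) (P' := S) ih F
      rw [hSe'] at h2
      exact le_trans h1 h2
  obtain ⟨P, hP⟩ := mono_conv hu (monotone_nat_of_le_succ hmono) hle
  have hPp := psd_limit hu hP
  have hfix : P = Ric A B Q R P := by
    have h1 := hP.comp (Filter.tendsto_add_atTop_nat 1)
    exact tendsto_nhds_unique (h1.congr hsucc) (ric_tendsto A B Q R hR hPp hP)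
  refine ⟨P, symm_of_psd hPp, ?_, hfix⟩
  rw [hfix]
  exact ric_pd A B Q R hQ hR hPp
end

section
/- Let A be a real n×n matrix, B a real n×m matrix, Q and R symmetric positive definite, and let P be a symmetric positive definite matrix satisfying the discrete algebraic Riccati equation P = Aᵀ P A + Q − Aᵀ P B (R + Bᵀ P B)⁻¹ Bᵀ P A. Then for every x ∈ ℝⁿ, the function u ↦ ‖x‖_Q² + ‖u‖_R² + ‖Ax + Bu‖_P² attains its minimum over u ∈ ℝᵐ at the unique minimizer u*(x) = −(R + Bᵀ P B)⁻¹ Bᵀ P A x, and the minimum value equals ‖x‖_P². -/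
open Matrix

/-- If `P` is a symmetric positive definite solution of the discrete algebraic
Riccati equation, then for every `x` the function
`u ↦ ‖x‖_Q² + ‖u‖_R² + ‖Ax + Bu‖_P²` attains its minimum at the unique minimizer
`u*(x) = −(R + Bᵀ P B)⁻¹ Bᵀ P A x`, with minimal value `‖x‖_P²`. -/
theorem dare_one_step_minimizer
    (n m : ℕ)
    (A : Matrix (Fin n) (Fin n) ℝ) (B : Matrix (Fin n) (Fin m) ℝ)
    (Q : Matrix (Fin n) (Fin n) ℝ) (R : Matrix (Fin m) (Fin m) ℝ)
    (P : Matrix (Fin n) (Fin n) ℝ)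
    (hQsymm : Q.IsSymm) (hQ : Q.PosDef) (hRsymm : R.IsSymm) (hR : R.PosDef)
    (hPsymm : P.IsSymm) (hP : P.PosDef)
    (hriccati : P = Aᵀ * P * A + Q - Aᵀ * P * B * (R + Bᵀ * P * B)⁻¹ * Bᵀ * P * A)
    (x : Fin n → ℝ) :
    let f : (Fin m → ℝ) → ℝ := fun u =>
      x ⬝ᵥ Q.mulVec x + u ⬝ᵥ R.mulVec u +
        (A.mulVec x + B.mulVec u) ⬝ᵥ P.mulVec (A.mulVec x + B.mulVec u)
    let ustar : Fin m → ℝ := -(((R + Bᵀ * P * B)⁻¹ * Bᵀ * P * A).mulVec x)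
    (∀ u : Fin m → ℝ, f ustar ≤ f u) ∧
    (∀ u : Fin m → ℝ, u ≠ ustar → f ustar < f u) ∧
    f ustar = x ⬝ᵥ P.mulVec x := by
  intro f ustar
  have sym : ∀ {k : ℕ} (M : Matrix (Fin k) (Fin k) ℝ), M.IsSymm → ∀ v w : Fin k → ℝ,
      v ⬝ᵥ M *ᵥ w = w ⬝ᵥ M *ᵥ v := by
    intro k M hM v w
    rw [dotProduct_mulVec, ← mulVec_transpose, hM.eq, dotProduct_comm]
  have tr : ∀ {k l : ℕ} (M : Matrix (Fin k) (Fin l) ℝ) (v : Fin l → ℝ) (w : Fin k → ℝ),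
      v ⬝ᵥ Mᵀ *ᵥ w = (M *ᵥ v) ⬝ᵥ w := by
    intro k l M v w
    rw [dotProduct_mulVec, vecMul_transpose]
  have hBPB : (Bᵀ * P * B).PosSemidef := by
    have := hP.posSemidef.conjTranspose_mul_mul_same B
    simpa [conjTranspose_eq_transpose_of_trivial] using this
  have hS : (R + Bᵀ * P * B).PosDef := hR.add_posSemidef hBPB
  have hdet : IsUnit (R + Bᵀ * P * B).det := hS.det_pos.ne'.isUnit
  have hSsymm : (R + Bᵀ * P * B).IsSymm := by
    have := hS.isHermitian
    rwa [IsHermitian, conjTranspose_eq_transpose_of_trivial] at this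
  have H2 : (R + Bᵀ * P * B) *ᵥ ustar = -(Bᵀ *ᵥ P *ᵥ A *ᵥ x) := by
    simp only [ustar, mulVec_neg, mulVec_mulVec, Matrix.mul_assoc]
    rw [← Matrix.mul_assoc Bᵀ P B, mul_nonsing_inv_cancel_left _ _ hdet]
  have H3 : x ⬝ᵥ P *ᵥ x = x ⬝ᵥ Q *ᵥ x + (A *ᵥ x) ⬝ᵥ P *ᵥ (A *ᵥ x)
      + ustar ⬝ᵥ (Bᵀ *ᵥ P *ᵥ A *ᵥ x) := by
    have e : (Aᵀ * P * B * (R + Bᵀ * P * B)⁻¹ * Bᵀ * P * A) *ᵥ x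
        = - (Aᵀ *ᵥ P *ᵥ B *ᵥ ustar) := by
      simp only [ustar, mulVec_neg, mulVec_mulVec, Matrix.mul_assoc, neg_neg]
    have e2 : (Aᵀ * P * A) *ᵥ x = Aᵀ *ᵥ P *ᵥ A *ᵥ x := by
      simp only [mulVec_mulVec, Matrix.mul_assoc]
    have e3 := congrArg (fun M => x ⬝ᵥ M *ᵥ x) hriccati
    simp only [sub_mulVec, add_mulVec, e, e2, dotProduct_sub, dotProduct_add,
      dotProduct_neg, tr] at e3
    rw [e3, tr, sym P hPsymm (A *ᵥ x) (B *ᵥ ustar)]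
    ring
  have key : ∀ u, f u = x ⬝ᵥ P *ᵥ x + (u - ustar) ⬝ᵥ (R + Bᵀ * P * B) *ᵥ (u - ustar) := by
    intro u
    have h1 : u ⬝ᵥ (R + Bᵀ * P * B) *ᵥ u = u ⬝ᵥ R *ᵥ u + (B *ᵥ u) ⬝ᵥ P *ᵥ (B *ᵥ u) := by
      rw [add_mulVec, dotProduct_add, ← mulVec_mulVec, ← mulVec_mulVec, tr]
    have h2 := sym _ hSsymm ustar u
    rw [H3, mulVec_sub, sub_dotProduct, dotProduct_sub, dotProduct_sub, h2, H2, h1]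
    simp only [f, dotProduct_neg, tr, mulVec_add, dotProduct_add, add_dotProduct]
    rw [sym P hPsymm (A *ᵥ x) (B *ᵥ u)]
    ring
  have hst : f ustar = x ⬝ᵥ P *ᵥ x := by rw [key]; simp
  have lt : ∀ u, u ≠ ustar → f ustar < f u := by
    intro u hu
    have := hS.dotProduct_mulVec_pos (sub_ne_zero.2 hu)
    rw [star_trivial] at this
    rw [hst, key u]
    linarith
  refine ⟨fun u => ?_, lt, hst⟩
  by_cases h : u = ustar
  · rw [h]
  · exact (lt u h).le
end

section
/- Let A, B, Q, R, P be as in the discrete algebraic Riccati setting (Q, R, P symmetric positive definite and P solving the Riccati equation). Define the LQR feedback u*(x) = −(R + Bᵀ P B)⁻¹ Bᵀ P A x and the closed-loop successor state x⁺ = A x + B u*(x). Then for every x ∈ ℝⁿ the exact Lyapunov descent identity ‖x⁺‖_P² = ‖x‖_P² − ‖x‖_Q² − ‖u*(x)‖_R² holds; in particular ‖x⁺‖_P² ≤ ‖x‖_P² − ‖x‖_Q². -/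
open Matrix

/-- Under the discrete algebraic Riccati setting, with the LQR feedback
`u*(x) = −(R + Bᵀ P B)⁻¹ Bᵀ P A x` and closed-loop successor `x⁺ = A x + B u*(x)`, one has the
exact Lyapunov descent identity `‖x⁺‖_P² = ‖x‖_P² − ‖x‖_Q² − ‖u*(x)‖_R²`, and in particular
`‖x⁺‖_P² ≤ ‖x‖_P² − ‖x‖_Q²`. -/
theorem dare_lyapunov_descent
    (n m : ℕ)
    (A : Matrix (Fin n) (Fin n) ℝ) (B : Matrix (Fin n) (Fin m) ℝ)
    (Q : Matrix (Fin n) (Fin n) ℝ) (R : Matrix (Fin m) (Fin m) ℝ)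
    (P : Matrix (Fin n) (Fin n) ℝ)
    (hQsymm : Q.IsSymm) (hQ : Q.PosDef) (hRsymm : R.IsSymm) (hR : R.PosDef)
    (hPsymm : P.IsSymm) (hP : P.PosDef)
    (hriccati : P = Aᵀ * P * A + Q - Aᵀ * P * B * (R + Bᵀ * P * B)⁻¹ * Bᵀ * P * A)
    (x : Fin n → ℝ) :
    let ustar : Fin m → ℝ := -(((R + Bᵀ * P * B)⁻¹ * Bᵀ * P * A).mulVec x)
    let xplus : Fin n → ℝ := A.mulVec x + B.mulVec ustar
    xplus ⬝ᵥ P.mulVec xplus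
      = x ⬝ᵥ P.mulVec x - x ⬝ᵥ Q.mulVec x - ustar ⬝ᵥ R.mulVec ustar ∧
    xplus ⬝ᵥ P.mulVec xplus ≤ x ⬝ᵥ P.mulVec x - x ⬝ᵥ Q.mulVec x := by
  intro u xp
  have hS : (R + Bᵀ * P * B).PosDef := by
    refine hR.add_posSemidef ?_
    have h := hP.posSemidef.conjTranspose_mul_mul_same B
    rwa [conjTranspose_eq_transpose_of_trivial] at h
  have hdet : IsUnit (R + Bᵀ * P * B).det := hS.det_pos.ne'.isUnit
  have hSu : (R + Bᵀ * P * B) *ᵥ u = -(Bᵀ *ᵥ (P *ᵥ (A *ᵥ x))) := by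
    simp only [u, mulVec_neg, mulVec_mulVec, Matrix.mul_assoc]
    rw [← Matrix.mul_assoc Bᵀ P B, mul_nonsing_inv_cancel_left _ _ hdet]
  have htr : ∀ {k l : ℕ} (M : Matrix (Fin k) (Fin l) ℝ) (a : Fin l → ℝ) (b : Fin k → ℝ),
      a ⬝ᵥ Mᵀ *ᵥ b = (M *ᵥ a) ⬝ᵥ b := by
    intro k l M a b
    rw [dotProduct_mulVec, vecMul_transpose]
  have hsym : (A *ᵥ x) ⬝ᵥ P *ᵥ (B *ᵥ u) = (B *ᵥ u) ⬝ᵥ P *ᵥ (A *ᵥ x) := by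
    have h := htr P (A *ᵥ x) (B *ᵥ u)
    rw [hPsymm.eq] at h
    rw [h, dotProduct_comm]
  have h1 : u ⬝ᵥ R *ᵥ u + (B *ᵥ u) ⬝ᵥ P *ᵥ (B *ᵥ u) = -((B *ᵥ u) ⬝ᵥ P *ᵥ (A *ᵥ x)) := by
    have h := congrArg (fun v => u ⬝ᵥ v) hSu
    simp only [add_mulVec, dotProduct_add, dotProduct_neg, ← mulVec_mulVec, htr] at h
    exact h
  have h2 : x ⬝ᵥ P *ᵥ x = (A *ᵥ x) ⬝ᵥ P *ᵥ (A *ᵥ x) + x ⬝ᵥ Q *ᵥ x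
      + (A *ᵥ x) ⬝ᵥ P *ᵥ (B *ᵥ u) := by
    have h := congrArg (fun M => x ⬝ᵥ M *ᵥ x) hriccati
    simp only [add_mulVec, sub_mulVec, dotProduct_add, dotProduct_sub, ← mulVec_mulVec, htr] at h
    rw [h]
    simp only [u, mulVec_neg, dotProduct_neg, ← mulVec_mulVec]
    ring
  have h3 : xp ⬝ᵥ P *ᵥ xp = x ⬝ᵥ P *ᵥ x - x ⬝ᵥ Q *ᵥ x - u ⬝ᵥ R *ᵥ u := by
    simp only [xp, mulVec_add, dotProduct_add, add_dotProduct]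
    linarith
  have h4 : 0 ≤ u ⬝ᵥ R *ᵥ u := by
    simpa using hR.posSemidef.dotProduct_mulVec_nonneg u
  exact ⟨h3, by linarith⟩
end

section
/- Let A, B, Q, R, P be as in the discrete algebraic Riccati setting (Q, R, P symmetric positive definite and P solving the Riccati equation), and let K* = −(R + Bᵀ P B)⁻¹ Bᵀ P A. Then for every initial state x₀ ∈ ℝⁿ, the closed-loop trajectory defined by x_{k+1} = (A + B K*) x_k converges to 0 as k → ∞. -/
open Matrix

theorem posdef_lower_bound_aux {n : ℕ} (Q : Matrix (Fin n) (Fin n) ℝ) (hQ : Q.PosDef) :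
    ∃ c : ℝ, 0 < c ∧ ∀ x : Fin n → ℝ, c * ‖x‖ ^ 2 ≤ x ⬝ᵥ (Q *ᵥ x) := by
  have hpos : ∀ x : Fin n → ℝ, x ≠ 0 → 0 < x ⬝ᵥ (Q *ᵥ x) := by
    intro x hx
    simpa using hQ.dotProduct_mulVec_pos hx
  have hcont : Continuous (fun x : Fin n → ℝ => x ⬝ᵥ (Q *ᵥ x)) := by
    fun_prop
  rcases (Metric.sphere (0 : Fin n → ℝ) 1).eq_empty_or_nonempty with he | hne
  · refine ⟨1, one_pos, fun x => ?_⟩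
    have hx : x = 0 := by
      by_contra hx
      have : (‖x‖⁻¹ • x) ∈ Metric.sphere (0 : Fin n → ℝ) 1 := by
        simp [norm_smul, hx]
      rw [he] at this
      exact this
    simp [hx]
  · obtain ⟨y, hy, hmin⟩ := (isCompact_sphere (0 : Fin n → ℝ) 1).exists_isMinOn hne
      hcont.continuousOn
    have hy0 : y ≠ 0 := by
      rintro rfl
      simp at hy
    refine ⟨_, hpos y hy0, fun x => ?_⟩
    by_cases hx : x = 0
    · simp [hx]
    have hmem : (‖x‖⁻¹ • x) ∈ Metric.sphere (0 : Fin n → ℝ) 1 := by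
      simp [norm_smul, hx]
    have h := hmin hmem
    simp only [Set.mem_setOf_eq, Matrix.mulVec_smul, smul_dotProduct, dotProduct_smul,
      smul_eq_mul] at h
    have hn : 0 < ‖x‖ := norm_pos_iff.mpr hx
    calc _ ≤ (‖x‖⁻¹ * (‖x‖⁻¹ * (x ⬝ᵥ (Q *ᵥ x)))) * ‖x‖ ^ 2 := by gcongr
      _ = _ := by field_simp

theorem closed_loop_identity_aux {n m : ℕ}
    (A : Matrix (Fin n) (Fin n) ℝ) (B : Matrix (Fin n) (Fin m) ℝ)
    (Q : Matrix (Fin n) (Fin n) ℝ) (R : Matrix (Fin m) (Fin m) ℝ)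
    (P : Matrix (Fin n) (Fin n) ℝ) (K : Matrix (Fin m) (Fin n) ℝ)
    (h1 : P = Aᵀ * P * A + Q + Aᵀ * P * B * K)
    (h2 : Bᵀ * P * A = -((R + Bᵀ * P * B) * K)) :
    (A + B * K)ᵀ * P * (A + B * K) = P - Q - Kᵀ * R * K := by
  have e : (A + B * K)ᵀ * P * (A + B * K) =
      Aᵀ * P * A + Aᵀ * P * B * K + Kᵀ * (Bᵀ * P * A) + Kᵀ * (Bᵀ * P * B) * K := by
    simp only [transpose_add, transpose_mul, Matrix.add_mul, Matrix.mul_add, Matrix.mul_assoc]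
    abel
  have e2 : P - Q = Aᵀ * P * A + Aᵀ * P * B * K := by
    nth_rewrite 1 [h1]
    abel
  rw [e, e2, h2]
  simp only [Matrix.add_mul, Matrix.mul_add, Matrix.mul_neg, Matrix.mul_assoc]
  abel

/-- Under the discrete algebraic Riccati setting, with the LQR feedback gain
`K* = −(R + Bᵀ P B)⁻¹ Bᵀ P A`, the closed-loop trajectory `x_{k+1} = (A + B K*) x_k` converges
to `0` from every initial state `x₀`. -/
theorem dare_closed_loop_convergence
    (n m : ℕ)
    (A : Matrix (Fin n) (Fin n) ℝ) (B : Matrix (Fin n) (Fin m) ℝ)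
    (Q : Matrix (Fin n) (Fin n) ℝ) (R : Matrix (Fin m) (Fin m) ℝ)
    (P : Matrix (Fin n) (Fin n) ℝ)
    (hQsymm : Q.IsSymm) (hQ : Q.PosDef) (hRsymm : R.IsSymm) (hR : R.PosDef)
    (hPsymm : P.IsSymm) (hP : P.PosDef)
    (hriccati : P = Aᵀ * P * A + Q - Aᵀ * P * B * (R + Bᵀ * P * B)⁻¹ * Bᵀ * P * A)
    (x₀ : Fin n → ℝ) :
    let Kstar : Matrix (Fin m) (Fin n) ℝ := -((R + Bᵀ * P * B)⁻¹ * Bᵀ * P * A)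
    Filter.Tendsto (fun k : ℕ => ((A + B * Kstar) ^ k).mulVec x₀)
      Filter.atTop (nhds 0) := by
  intro K
  have hS : (R + Bᵀ * P * B).PosDef := by
    refine hR.add_posSemidef ?_
    simpa using hP.posSemidef.conjTranspose_mul_mul_same B
  have hid : (A + B * K)ᵀ * P * (A + B * K) = P - Q - Kᵀ * R * K := by
    apply closed_loop_identity_aux
    · nth_rewrite 1 [hriccati]
      simp only [K, Matrix.mul_neg, Matrix.mul_assoc]
      abel
    · have hu : IsUnit (R + Bᵀ * P * B).det := hS.det_pos.ne'.isUnit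
      simp only [K, Matrix.mul_neg, neg_neg, Matrix.mul_assoc]
      rw [← Matrix.mul_assoc Bᵀ P B, Matrix.mul_nonsing_inv_cancel_left _ _ hu]
  set M := A + B * K with hM
  have hstep : ∀ x : Fin n → ℝ,
      x ⬝ᵥ (Q *ᵥ x) ≤ x ⬝ᵥ (P *ᵥ x) - (M *ᵥ x) ⬝ᵥ (P *ᵥ (M *ᵥ x)) := by
    intro x
    have h := congrArg (fun N => x ⬝ᵥ (N *ᵥ x)) hid
    simp only [Matrix.sub_mulVec, dotProduct_sub] at h
    have hl : x ⬝ᵥ ((Mᵀ * P * M) *ᵥ x) = (M *ᵥ x) ⬝ᵥ (P *ᵥ (M *ᵥ x)) := by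
      rw [← Matrix.mulVec_mulVec, ← Matrix.mulVec_mulVec, Matrix.dotProduct_mulVec,
        Matrix.vecMul_transpose]
    have hr : 0 ≤ x ⬝ᵥ ((Kᵀ * R * K) *ᵥ x) := by
      have := (hR.posSemidef.conjTranspose_mul_mul_same K).dotProduct_mulVec_nonneg x
      simpa using this
    rw [hl] at h
    linarith
  obtain ⟨c, hc, hcQ⟩ := posdef_lower_bound_aux Q hQ
  have hPn : ∀ x : Fin n → ℝ, 0 ≤ x ⬝ᵥ (P *ᵥ x) := fun x => by
    simpa using hP.posSemidef.dotProduct_mulVec_nonneg x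
  have hsucc : ∀ k, (M ^ (k + 1)) *ᵥ x₀ = M *ᵥ ((M ^ k) *ᵥ x₀) := fun k => by
    rw [pow_succ', Matrix.mulVec_mulVec]
  have hsum : ∀ N : ℕ, ∑ k ∈ Finset.range N, ‖(M ^ k) *ᵥ x₀‖ ^ 2 * c ≤
      x₀ ⬝ᵥ (P *ᵥ x₀) - ((M ^ N) *ᵥ x₀) ⬝ᵥ (P *ᵥ ((M ^ N) *ᵥ x₀)) := by
    intro N
    induction N with
    | zero => simp
    | succ N ih =>
      rw [Finset.sum_range_succ, hsucc]
      have := hstep ((M ^ N) *ᵥ x₀)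
      have := hcQ ((M ^ N) *ᵥ x₀)
      linarith
  have hsummable : Summable (fun k : ℕ => ‖(M ^ k) *ᵥ x₀‖ ^ 2 * c) := by
    refine summable_of_sum_range_le (c := x₀ ⬝ᵥ (P *ᵥ x₀)) (fun k => by positivity) (fun N => ?_)
    have := hsum N
    have := hPn ((M ^ N) *ᵥ x₀)
    linarith
  have ht := ((summable_mul_right_iff hc.ne').mp hsummable).tendsto_atTop_zero
  rw [tendsto_zero_iff_norm_tendsto_zero]
  have := ht.sqrt
  simpa [Real.sqrt_sq] using this
end
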